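/- Let c > 0 and α ≥ 0 be real numbers, and let μ_n^{(α)}(c) denote the (n+1)-th singular value (eigenvalue in modulus, in decreasing order) of the weighted finite Fourier transform operator F_c^{(α)} f(x) = ∫_{-1}^{1} e^{icxy} f(y)(1-y²)^α dy on L²([-1,1],(1-y²)^α dy). Then for every integer n > (ec+1)/2, |μ_n^{(α)}(c)| ≤ (k_α / (c^{α/2+1} log((2n-1)/(ec)))) · (ec/(2n-1))^{n+α/2}, where k_α = (2/e)^{1+α/2} · π · √Γ(α+1). -/

import Mathlib

open Real MeasureTheory intervalIntegral

theorem exists_iteratedDeriv_eq_zero (n : ℕ) :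
    ∀ {h : ℝ → ℝ}, ContDiff ℝ n h → ∀ {x : Fin (n + 1) → ℝ}, StrictMono x →
      (∀ i, h (x i) = 0) → ∃ ξ, iteratedDeriv n h ξ = 0 := by
  induction n with
  | zero =>
    intro h _ x _ hx
    exact ⟨x 0, by simpa using hx 0⟩
  | succ n ih =>
    intro h hh x hmono hx
    have rolle : ∀ i : Fin (n + 1), ∃ ξ ∈ Set.Ioo (x i.castSucc) (x i.succ), deriv h ξ = 0 :=
      fun i => exists_deriv_eq_zero (hmono i.castSucc_lt_succ) hh.continuous.continuousOn
        (by rw [hx, hx])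
    choose ξ hξ hξ0 using rolle
    have hh' : ContDiff ℝ n (deriv h) := by
      have : ContDiff ℝ ((n : WithTop ℕ∞) + 1) h := by exact_mod_cast hh
      exact (contDiff_succ_iff_deriv.1 this).2.2
    rw [iteratedDeriv_succ']
    refine ih hh' (x := ξ) (Fin.strictMono_iff_lt_succ.2 fun i => ?_) hξ0
    exact (hξ i.castSucc).2.trans (by simpa using (hξ i.succ).1)

theorem iteratedDeriv_polynomial_eval (P : Polynomial ℝ) (n : ℕ) :
    iteratedDeriv n (fun t => P.eval t) = fun t => (Polynomial.derivative^[n] P).eval t := by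
  induction n with
  | zero => simp
  | succ n ih =>
    rw [iteratedDeriv_succ, ih, Function.iterate_succ_apply']
    ext t
    simp

theorem eval_iterate_derivative_of_natDegree_le {P : Polynomial ℝ} {n : ℕ}
    (hP : P.natDegree ≤ n) (t : ℝ) :
    (Polynomial.derivative^[n] P).eval t = n.factorial * P.coeff n := by
  have h0 : (Polynomial.derivative^[n] P).natDegree = 0 := by
    have := Polynomial.natDegree_iterate_derivative P n
    omega
  rw [Polynomial.eq_C_of_natDegree_eq_zero h0, Polynomial.coeff_iterate_derivative]
  simp [Nat.descFactorial_self]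

/-- Error of polynomial interpolation at the Chebyshev nodes. -/
theorem abs_sub_eval_le_of_eq_on_chebyshev_roots {n : ℕ} (hn : n ≠ 0) {g : ℝ → ℝ}
    (hg : ContDiff ℝ n g) {M : ℝ} (hM : ∀ t, |iteratedDeriv n g t| ≤ M)
    {p : Polynomial ℝ} (hp : p.degree < n)
    (hpg : ∀ t ∈ (Polynomial.Chebyshev.T ℝ n).roots, p.eval t = g t)
    {y : ℝ} (hy : |y| ≤ 1) :
    |g y - p.eval y| ≤ 2 * M / (2 ^ n * n.factorial) := by
  set T := Polynomial.Chebyshev.T ℝ (n : ℤ) with hT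
  have hM0 : 0 ≤ M := (abs_nonneg _).trans (hM 0)
  have hTdeg : T.natDegree = n := by simp [hT]
  have hT0 : T ≠ 0 := by rintro h; rw [h] at hTdeg; simp at hTdeg; omega
  have hTcoeff : 2 * T.coeff n = 2 ^ n := by
    have := Polynomial.Chebyshev.leadingCoeff_T (R := ℝ) (n : ℤ)
    rw [← hT, Polynomial.leadingCoeff, hTdeg] at this
    rw [this, Int.natAbs_natCast, ← pow_succ']
    congr 1; omega
  by_cases hTy : T.eval y = 0
  · rw [hpg y ((Polynomial.mem_roots hT0).2 hTy), sub_self, abs_zero]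
    positivity
  set l := (g y - p.eval y) / T.eval y with hl
  set P := p + Polynomial.C l * T with hPdef
  have hPdeg : P.natDegree ≤ n := by
    refine (Polynomial.natDegree_add_le _ _).trans (max_le ?_ ?_)
    · exact Polynomial.natDegree_le_of_degree_le hp.le
    · exact (Polynomial.natDegree_C_mul_le _ _).trans hTdeg.le
  have hPcoeff : P.coeff n = l * T.coeff n := by
    simp [hPdef, Polynomial.coeff_eq_zero_of_degree_lt hp]
  set s := insert y T.roots.toFinset with hs
  have hcard : s.card = n + 1 := by
    rw [hs, Finset.card_insert_of_notMem, hT, Polynomial.Chebyshev.roots_T_real]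
    · simp only [Finset.val_toFinset]
      rw [Finset.card_image_of_injOn, Finset.card_range]
      exact (Finset.range n).nodup_map_iff_injOn.mp (Polynomial.Chebyshev.roots_T_real_nodup n)
    · simp [hT0, Polynomial.IsRoot, hTy]
  have hPc : ContDiff ℝ n (fun t => P.eval t) := by
    simpa using Polynomial.contDiff_aeval P (n : WithTop ℕ∞) (𝕜 := ℝ)
  obtain ⟨ξ, hξ⟩ := exists_iteratedDeriv_eq_zero n (h := fun t => g t - P.eval t)
    (hg.sub hPc) (s.orderEmbOfFin hcard).strictMono (by
      intro i
      have hi := s.orderEmbOfFin_mem hcard i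
      generalize s.orderEmbOfFin hcard i = t at hi
      rcases Finset.mem_insert.1 hi with rfl | hi
      · simp [hPdef, hl, div_mul_cancel₀ _ hTy]
      · rw [Multiset.mem_toFinset] at hi
        have h1 := hpg t hi
        have h2 : T.eval t = 0 := Polynomial.isRoot_of_mem_roots hi
        simp [hPdef, h1, h2])
  have hξ' : iteratedDeriv n g ξ = n.factorial * (l * T.coeff n) := by
    have h1 := iteratedDeriv_sub (n := n) (x := ξ) hg.contDiffAt hPc.contDiffAt
    have h2 : iteratedDeriv n (g - fun t => P.eval t) ξ = 0 := hξ
    rw [h2, iteratedDeriv_polynomial_eval] at h1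
    simp only [eval_iterate_derivative_of_natDegree_le hPdeg,
      hPcoeff] at h1
    linarith
  have hTy1 : |T.eval y| ≤ 1 := Polynomial.Chebyshev.abs_eval_T_real_le_one n hy
  have hgl : |g y - p.eval y| ≤ |l| := by
    have : g y - p.eval y = l * T.eval y := (div_mul_cancel₀ _ hTy).symm
    rw [this, abs_mul]
    exact mul_le_of_le_one_right (abs_nonneg _) hTy1
  refine hgl.trans ?_
  rw [le_div_iff₀ (by positivity)]
  have h3 := hM ξ
  rw [hξ'] at h3
  calc |l| * (2 ^ n * n.factorial) = 2 * |n.factorial * (l * T.coeff n)| := by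
        have hc : T.coeff n = 2 ^ n / 2 := by linarith
        rw [hc, abs_mul, abs_mul, Nat.abs_cast, abs_of_pos (by positivity : (0:ℝ) < 2 ^ n / 2)]
        ring
    _ ≤ 2 * M := by linarith

theorem exists_polynomial_abs_sub_le {n : ℕ} (hn : n ≠ 0) {g : ℝ → ℝ}
    (hg : ContDiff ℝ n g) {M : ℝ} (hM : ∀ t, |iteratedDeriv n g t| ≤ M) :
    ∃ p : Polynomial ℝ, p.degree < n ∧
      ∀ y, |y| ≤ 1 → |g y - p.eval y| ≤ 2 * M / (2 ^ n * n.factorial) := by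
  set s := (Polynomial.Chebyshev.T ℝ n).roots.toFinset with hs
  have hinj : Set.InjOn (id : ℝ → ℝ) s := Function.injective_id.injOn
  have hdeg : (Lagrange.interpolate s id g).degree < n := by
    refine (Lagrange.degree_interpolate_lt g hinj).trans_le ?_
    have h1 : s.card ≤ n :=
      (Multiset.toFinset_card_le _).trans ((Polynomial.card_roots' _).trans (by simp))
    exact_mod_cast h1
  refine ⟨_, hdeg, fun y hy =>
    abs_sub_eval_le_of_eq_on_chebyshev_roots hn hg hM hdeg (fun t ht => ?_) hy⟩
  exact Lagrange.eval_interpolate_at_node g hinj (Multiset.mem_toFinset.2 ht)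

theorem exists_polynomial_norm_exp_sub_le {n : ℕ} (hn : n ≠ 0) (a : ℝ) :
    ∃ p : Polynomial ℂ, p.degree < n ∧ ∀ y : ℝ, |y| ≤ 1 →
      ‖Complex.exp (Complex.I * (a * y)) - p.eval (y : ℂ)‖ ≤
        4 * (|a| / 2) ^ n / n.factorial := by
  have hcos : ∀ t, |iteratedDeriv n (fun t => cos (a * t)) t| ≤ |a| ^ n := fun t => by
    rw [iteratedDeriv_comp_const_mul Real.contDiff_cos]
    simp only [abs_mul, abs_pow]
    exact mul_le_of_le_one_right (by positivity) (Real.abs_iteratedDeriv_cos_le_one n _)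
  have hsin : ∀ t, |iteratedDeriv n (fun t => sin (a * t)) t| ≤ |a| ^ n := fun t => by
    rw [iteratedDeriv_comp_const_mul Real.contDiff_sin]
    simp only [abs_mul, abs_pow]
    exact mul_le_of_le_one_right (by positivity) (Real.abs_iteratedDeriv_sin_le_one n _)
  obtain ⟨p, hp, hpe⟩ := exists_polynomial_abs_sub_le hn (by fun_prop) hcos
  obtain ⟨q, hq, hqe⟩ := exists_polynomial_abs_sub_le hn (by fun_prop) hsin
  refine ⟨p.map Complex.ofRealHom + Polynomial.C Complex.I * q.map Complex.ofRealHom, ?_, ?_⟩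
  · refine (Polynomial.degree_add_le _ _).trans_lt (max_lt ?_ ?_)
    · exact Polynomial.degree_map_le.trans_lt hp
    · rw [Polynomial.degree_C_mul Complex.I_ne_zero]
      exact Polynomial.degree_map_le.trans_lt hq
  · intro y hy
    have hev : ∀ r : Polynomial ℝ, (r.map Complex.ofRealHom).eval (y : ℂ) = (r.eval y : ℝ) :=
      fun r => Polynomial.eval_map_apply (f := Complex.ofRealHom) (p := r) y
    have hexp : Complex.exp (Complex.I * (a * y)) -
        (p.map Complex.ofRealHom + Polynomial.C Complex.I * q.map Complex.ofRealHom).eval (y : ℂ)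
        = ((cos (a * y) - p.eval y : ℝ) : ℂ) + ((sin (a * y) - q.eval y : ℝ) : ℂ) * Complex.I := by
      rw [mul_comm Complex.I, Complex.exp_mul_I, Polynomial.eval_add, Polynomial.eval_mul,
        Polynomial.eval_C, hev, hev]
      push_cast
      ring
    rw [hexp]
    calc _ ≤ |cos (a * y) - p.eval y| + |sin (a * y) - q.eval y| := by
          refine (norm_add_le _ _).trans (le_of_eq ?_)
          rw [norm_mul, Complex.norm_I, mul_one, Complex.norm_real, Complex.norm_real]
          rfl
      _ ≤ 2 * |a| ^ n / (2 ^ n * n.factorial) + 2 * |a| ^ n / (2 ^ n * n.factorial) :=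
          add_le_add (hpe y hy) (hqe y hy)
      _ = _ := by rw [div_pow]; field_simp; ring

theorem integral_zero_one_pow_mul_one_sub_sq_rpow_le (n : ℕ) {α : ℝ} (hα : 0 ≤ α) :
    ∫ x in (0 : ℝ)..1, x ^ (2 * n) * (1 - x ^ 2) ^ α ≤
      Gamma (α + 1) / (n + 1 / 2) ^ (α + 1) / 2 := by
  have himage : (fun s : ℝ => exp (-s / 2)) '' Set.Ioi 0 = Set.Ioo 0 1 := by
    ext x
    constructor
    · rintro ⟨s, hs, rfl⟩
      exact ⟨exp_pos _, exp_lt_one_iff.2 (by have : 0 < s := hs; linarith)⟩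
    · rintro ⟨h0, h1⟩
      refine ⟨-2 * log x, ?_, ?_⟩
      · have := log_neg h0 h1
        simp only [Set.mem_Ioi]; linarith
      · simp only
        rw [show -(-2 * log x) / 2 = log x by ring, exp_log h0]
  have hderiv : ∀ s ∈ Set.Ioi (0 : ℝ), HasDerivWithinAt (fun s : ℝ => exp (-s / 2))
      (exp (-s / 2) * (-1 / 2)) (Set.Ioi 0) s := fun s _ =>
    (((hasDerivAt_id s).neg.div_const 2).exp).hasDerivWithinAt
  have hinj : Set.InjOn (fun s : ℝ => exp (-s / 2)) (Set.Ioi 0) := by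
    intro s _ t _ h
    have := exp_injective h
    linarith
  have hr : (0 : ℝ) < n + 1 / 2 := by positivity
  have hGamma := integral_rpow_mul_exp_neg_mul_Ioi (a := α + 1) (r := n + 1 / 2)
    (by linarith) hr
  have hint : IntegrableOn (fun s : ℝ => s ^ α * exp (-((n + 1 / 2) * s))) (Set.Ioi 0) := by
    have := integrableOn_rpow_mul_exp_neg_mul_rpow (p := 1) (s := α) (b := n + 1 / 2)
      (by linarith) one_pos hr
    simpa only [neg_mul, rpow_one] using this
  rw [integral_of_le zero_le_one, integral_Ioc_eq_integral_Ioo, ← himage,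
    integral_image_eq_integral_abs_deriv_smul measurableSet_Ioi hderiv hinj]
  calc _ ≤ ∫ s in Set.Ioi (0 : ℝ), 1 / 2 * (s ^ α * exp (-((n + 1 / 2) * s))) := by
        refine integral_mono_of_nonneg ?_ (hint.const_mul _) ?_
        · refine (ae_restrict_mem measurableSet_Ioi).mono fun s (hs : 0 < s) => ?_
          have : exp (-s / 2) ^ 2 ≤ 1 :=
            pow_le_one₀ (exp_pos _).le (exp_le_one_iff.2 (by linarith))
          have : 0 ≤ (1 - exp (-s / 2) ^ 2) ^ α := rpow_nonneg (by linarith) _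
          simp only [Pi.zero_apply, smul_eq_mul]
          positivity
        · refine (ae_restrict_mem measurableSet_Ioi).mono fun s (hs : 0 < s) => ?_
          have h1 : exp (-s / 2) ^ 2 = exp (-s) := by
            rw [← exp_nat_mul]; congr 1; push_cast; ring
          have h2 : exp (-s) ≤ 1 := exp_le_one_iff.2 (by linarith)
          have h3 : (1 - exp (-s)) ^ α ≤ s ^ α :=
            rpow_le_rpow (by linarith) (by linarith [add_one_le_exp (-s)]) hα
          have h4 : exp (-((n + 1 / 2) * s)) = exp (-s / 2) * exp (-s / 2) ^ (2 * n) := by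
            rw [← exp_nat_mul, ← exp_add]; congr 1; push_cast; ring
          simp only [smul_eq_mul]
          rw [h1, abs_mul, abs_of_pos (exp_pos _), h4]
          norm_num
          have : 0 ≤ exp (-s / 2) * exp (-s / 2) ^ (2 * n) := by positivity
          nlinarith [mul_le_mul_of_nonneg_left h3 this]
    _ = _ := by
        rw [MeasureTheory.integral_const_mul]
        rw [show α + 1 - 1 = α by ring] at hGamma
        rw [hGamma, div_rpow zero_le_one hr.le, one_rpow]
        ring

theorem continuous_one_sub_sq_rpow {α : ℝ} (hα : 0 ≤ α) :
    Continuous fun y : ℝ => (1 - y ^ 2) ^ α :=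
  Continuous.rpow_const (by fun_prop) fun _ => Or.inr hα

theorem integral_pow_mul_one_sub_sq_rpow_le (n : ℕ) {α : ℝ} (hα : 0 ≤ α) :
    ∫ x in (-1 : ℝ)..1, x ^ (2 * n) * (1 - x ^ 2) ^ α ≤
      Gamma (α + 1) / (n + 1 / 2) ^ (α + 1) := by
  have hw := continuous_one_sub_sq_rpow hα
  have hc : Continuous fun x : ℝ => x ^ (2 * n) * (1 - x ^ 2) ^ α := by fun_prop
  have hneg : ∫ x in (-1 : ℝ)..0, x ^ (2 * n) * (1 - x ^ 2) ^ α =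
      ∫ x in (0 : ℝ)..1, x ^ (2 * n) * (1 - x ^ 2) ^ α := by
    have := integral_comp_neg (a := 0) (b := 1) fun x : ℝ => x ^ (2 * n) * (1 - x ^ 2) ^ α
    simpa [Even.neg_pow (even_two_mul n)] using this.symm
  rw [← integral_add_adjacent_intervals (hc.intervalIntegrable (-1) 0)
    (hc.intervalIntegrable 0 1), hneg]
  linarith [integral_zero_one_pow_mul_one_sub_sq_rpow_le n hα]

theorem integral_one_sub_sq_rpow_le_two {α : ℝ} (hα : 0 ≤ α) :
    ∫ x in (-1 : ℝ)..1, (1 - x ^ 2) ^ α ≤ 2 := by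
  calc _ ≤ ∫ _ in (-1 : ℝ)..1, (1 : ℝ) := by
        refine integral_mono_on (by norm_num)
          ((continuous_one_sub_sq_rpow hα).intervalIntegrable _ _) (by simp) fun x hx => ?_
        exact rpow_le_one (by nlinarith [hx.1, hx.2]) (by nlinarith [sq_nonneg x]) hα
    _ = 2 := by norm_num

/-- The numerical comparison behind `mu_decay`. -/
theorem decay_bound_le {c α : ℝ} (hc : 0 < c) (hα : 0 ≤ α) {n : ℕ}
    (hn : (exp 1 * c + 1) / 2 < (n : ℝ)) :
    4 * √2 * ((c / 2) ^ n / n.factorial) * √(Gamma (α + 1) / (n + 1 / 2) ^ (α + 1)) ≤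
      (2 / exp 1) ^ (1 + α / 2) * π * √(Gamma (α + 1)) /
          (c ^ (α / 2 + 1) * log ((2 * (n : ℝ) - 1) / (exp 1 * c))) *
          (exp 1 * c / (2 * (n : ℝ) - 1)) ^ ((n : ℝ) + α / 2) := by
  have he := exp_pos 1
  have hec : 0 < exp 1 * c := by positivity
  have hm : exp 1 * c < 2 * n - 1 := by linarith
  have hm0 : (0 : ℝ) < 2 * n - 1 := hec.trans hm
  have hn0 : (0 : ℝ) < n := by linarith
  set q := exp 1 * c / (2 * n - 1) with hq
  have hq0 : 0 < q := by positivity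
  have hq1 : q < 1 := (div_lt_one hm0).2 hm
  have hG := Gamma_pos_of_pos (by linarith : 0 < α + 1)
  set L := log ((2 * (n : ℝ) - 1) / (exp 1 * c)) with hL
  have hLpos : 0 < L := log_pos ((one_lt_div hec).2 hm)
  have hLq : L * q ≤ 1 := by
    have h := log_le_sub_one_of_pos (inv_pos.2 hq0)
    rw [hq, inv_div, ← hL, ← inv_div, ← hq] at h
    have : q⁻¹ * q = 1 := inv_mul_cancel₀ hq0.ne'
    nlinarith
  have hleft : 4 * √2 * ((c / 2) ^ n / n.factorial) * √(Gamma (α + 1) / (n + 1 / 2) ^ (α + 1)) ≤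
      π * (exp 1 * c / (2 * n)) ^ n * √(Gamma (α + 1)) * ((n : ℝ) ^ (α / 2 + 1))⁻¹ := by
    have hsqrt : √(Gamma (α + 1) / (n + 1 / 2) ^ (α + 1)) ≤
        √(Gamma (α + 1)) / (n : ℝ) ^ ((α + 1) / 2) := by
      have h : (n : ℝ) ^ ((α + 1) / 2) = √((n : ℝ) ^ (α + 1)) := by
        rw [sqrt_eq_rpow, ← rpow_mul hn0.le]
        congr 1; ring
      rw [h, ← sqrt_div hG.le]
      gcongr
      linarith
    have hpow : √(n : ℝ) * (n : ℝ) ^ ((α + 1) / 2) = (n : ℝ) ^ (α / 2 + 1) := by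
      rw [sqrt_eq_rpow, ← rpow_add hn0]
      congr 1; ring
    have hpi : 4 ≤ π * √π := by
      have h3 := pi_gt_three
      have : (3 / 2 : ℝ) ≤ √π := le_sqrt_of_sq_le (by linarith)
      nlinarith
    calc _ ≤ 4 * √2 * ((c / 2) ^ n / (√(2 * π * n) * (n / exp 1) ^ n)) *
          (√(Gamma (α + 1)) / (n : ℝ) ^ ((α + 1) / 2)) := by
          gcongr
          exact Stirling.le_factorial_stirling n
      _ = 4 / √π * (exp 1 * c / (2 * n)) ^ n * √(Gamma (α + 1)) *
          ((n : ℝ) ^ (α / 2 + 1))⁻¹ := by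
          have hq' : exp 1 * c / (2 * n) = c / 2 / (n / exp 1) := by field_simp
          have hnp : (n : ℝ) ^ ((α + 1) / 2) ≠ 0 := (rpow_pos_of_pos hn0 _).ne'
          rw [← hpow, hq', div_pow (c / 2), sqrt_mul (by positivity), sqrt_mul (by positivity)]
          field_simp
      _ ≤ _ := by
          gcongr
          rw [div_le_iff₀ (by positivity)]
          exact hpi
  have hright : (2 / exp 1) ^ (1 + α / 2) * π * √(Gamma (α + 1)) / (c ^ (α / 2 + 1) * L) *
      q ^ ((n : ℝ) + α / 2) =
      π * q ^ n * √(Gamma (α + 1)) * (((n : ℝ) - 1 / 2) ^ (α / 2 + 1))⁻¹ / (L * q) := by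
    have h1 : q ^ ((n : ℝ) + α / 2) = q ^ n * q ^ (α / 2 + 1) / q := by
      rw [rpow_add hq0, rpow_natCast, rpow_add hq0, rpow_one]
      field_simp
    have h2 : (2 / exp 1) ^ (1 + α / 2) * q ^ (α / 2 + 1) =
        c ^ (α / 2 + 1) * (((n : ℝ) - 1 / 2) ^ (α / 2 + 1))⁻¹ := by
      rw [add_comm 1, ← mul_rpow (by positivity) hq0.le, ← inv_rpow (by linarith),
        ← mul_rpow hc.le (inv_nonneg.2 (by linarith))]
      congr 1
      have : (n : ℝ) - 1 / 2 = (2 * n - 1) / 2 := by ring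
      rw [hq, this]
      field_simp
    have hcp : c ^ (α / 2 + 1) ≠ 0 := (rpow_pos_of_pos hc _).ne'
    calc _ = ((2 / exp 1) ^ (1 + α / 2) * q ^ (α / 2 + 1)) * (π * √(Gamma (α + 1)) * q ^ n /
          (c ^ (α / 2 + 1) * L * q)) := by rw [h1]; field_simp
      _ = _ := by rw [h2]; field_simp
  rw [hright]
  refine hleft.trans ?_
  have hX : 0 ≤ π * q ^ n * √(Gamma (α + 1)) * (((n : ℝ) - 1 / 2) ^ (α / 2 + 1))⁻¹ := by
    have : 0 < (n : ℝ) - 1 / 2 := by linarith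
    positivity
  refine le_trans ?_ (le_div_self hX (by positivity) hLq)
  have hhalf : 0 < (n : ℝ) - 1 / 2 := by linarith
  gcongr
  · rw [hq]; gcongr; linarith
  · linarith

theorem one_sub_sq_rpow_nonneg {α y : ℝ} (hy : y ∈ Set.Icc (-1 : ℝ) 1) :
    0 ≤ (1 - y ^ 2) ^ α :=
  rpow_nonneg (by nlinarith [hy.1, hy.2]) _

/-- Parseval's identity for finite linear combinations of an orthonormal system. -/
theorem integral_norm_sq_sum_mul_weight {ι : Type*} [Fintype ι] [DecidableEq ι] {w : ℝ → ℝ}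
    (hw : Continuous w) {ψ : ι → ℝ → ℂ} (hcont : ∀ i, Continuous (ψ i))
    (horth : ∀ i j, (∫ y in (-1 : ℝ)..1, ψ i y * (starRingEnd ℂ) (ψ j y) * (w y : ℂ)) =
      if i = j then 1 else 0) (b : ι → ℂ) :
    ∫ y in (-1 : ℝ)..1, ‖∑ i, b i * ψ i y‖ ^ 2 * w y = ∑ i, ‖b i‖ ^ 2 := by
  have hw' : Continuous fun y => (w y : ℂ) := Complex.continuous_ofReal.comp hw
  have hconj : ∀ i, Continuous fun y => (starRingEnd ℂ) (ψ i y) := fun i =>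
    Complex.continuous_conj.comp (hcont i)
  have hexpand : ∀ y, ((‖∑ i, b i * ψ i y‖ ^ 2 * w y : ℝ) : ℂ) =
      ∑ i, ∑ j, b i * (starRingEnd ℂ) (b j) * (ψ i y * (starRingEnd ℂ) (ψ j y) * (w y : ℂ)) := by
    intro y
    push_cast
    rw [← Complex.mul_conj', map_sum, Finset.sum_mul_sum, Finset.sum_mul]
    refine Finset.sum_congr rfl fun i _ => ?_
    rw [Finset.sum_mul]
    refine Finset.sum_congr rfl fun j _ => ?_
    rw [map_mul]; ring
  apply Complex.ofReal_injective
  rw [← intervalIntegral.integral_ofReal]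
  simp_rw [hexpand]
  rw [intervalIntegral.integral_finsetSum]
  · push_cast
    refine Finset.sum_congr rfl fun i _ => ?_
    rw [intervalIntegral.integral_finsetSum]
    · simp_rw [intervalIntegral.integral_const_mul, horth]
      simp [Complex.mul_conj']
    · intro j _
      apply Continuous.intervalIntegrable
      have := hcont i
      have := hconj j
      fun_prop
  · intro i _
    apply Continuous.intervalIntegrable
    have := hcont i
    fun_prop

theorem integral_norm_mul_weight_le {α : ℝ} (hα : 0 ≤ α) {f : ℝ → ℂ} (hf : Continuous f) :
    ∫ y in (-1 : ℝ)..1, ‖f y‖ * (1 - y ^ 2) ^ α ≤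
      √2 * √(∫ y in (-1 : ℝ)..1, ‖f y‖ ^ 2 * (1 - y ^ 2) ^ α) := by
  have hw := continuous_one_sub_sq_rpow hα
  have h1 : Continuous fun y => ‖f y‖ * (1 - y ^ 2) ^ α := by fun_prop
  have h2 : Continuous fun y => ‖f y‖ ^ 2 * (1 - y ^ 2) ^ α := by fun_prop
  set A := ∫ y in (-1 : ℝ)..1, ‖f y‖ * (1 - y ^ 2) ^ α
  set B := ∫ y in (-1 : ℝ)..1, ‖f y‖ ^ 2 * (1 - y ^ 2) ^ α
  set W := ∫ y in (-1 : ℝ)..1, (1 - y ^ 2) ^ α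
  have hW : W ≤ 2 := integral_one_sub_sq_rpow_le_two hα
  have hquad : ∀ t : ℝ, 0 ≤ B - 2 * t * A + t ^ 2 * W := by
    intro t
    have : 0 ≤ ∫ y in (-1 : ℝ)..1, (‖f y‖ - t) ^ 2 * (1 - y ^ 2) ^ α :=
      intervalIntegral.integral_nonneg (by norm_num) fun y hy =>
        mul_nonneg (sq_nonneg _) (one_sub_sq_rpow_nonneg hy)
    have heq : ∫ y in (-1 : ℝ)..1, (‖f y‖ - t) ^ 2 * (1 - y ^ 2) ^ α =
        B - 2 * t * A + t ^ 2 * W := by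
      rw [← intervalIntegral.integral_const_mul, ← intervalIntegral.integral_const_mul,
        ← intervalIntegral.integral_sub (h2.intervalIntegrable _ _)
          ((h1.intervalIntegrable _ _).const_mul _),
        ← intervalIntegral.integral_add
          ((h2.intervalIntegrable _ _).sub ((h1.intervalIntegrable _ _).const_mul _))
          ((hw.intervalIntegrable _ _).const_mul _)]
      congr 1
      ext y
      ring
    rwa [heq] at this
  rw [← sqrt_mul (by norm_num)]
  apply le_sqrt_of_sq_le
  nlinarith [hquad (A / 2), sq_nonneg A]

theorem exists_ne_zero_sum_mul_eq_zero {n : ℕ} (M : Fin n → Fin (n + 1) → ℂ) :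
    ∃ a : Fin (n + 1) → ℂ, a ≠ 0 ∧ ∀ k, ∑ j, a j * M k j = 0 := by
  have hker : LinearMap.ker (Matrix.mulVecLin (Matrix.of M)) ≠ ⊥ :=
    LinearMap.ker_ne_bot_of_finrank_lt (by simp)
  obtain ⟨a, ha, ha0⟩ := Submodule.exists_mem_ne_zero_of_ne_bot hker
  refine ⟨a, ha0, fun k => ?_⟩
  have := congrFun (LinearMap.mem_ker.1 ha) k
  simpa [Matrix.mulVec, dotProduct, mul_comm] using this

theorem integral_polynomial_mul_eq_zero {n : ℕ} {g : ℝ → ℂ} (hg : Continuous g)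
    (hmom : ∀ k < n, ∫ y in (-1 : ℝ)..1, (y : ℂ) ^ k * g y = 0) {p : Polynomial ℂ}
    (hp : p.degree < n) : ∫ y in (-1 : ℝ)..1, p.eval (y : ℂ) * g y = 0 := by
  have h : ∀ y : ℝ, p.eval (y : ℂ) * g y =
      ∑ k ∈ Finset.range n, p.coeff k * ((y : ℂ) ^ k * g y) := by
    intro y
    rcases eq_or_ne p 0 with rfl | hp0
    · simp
    rw [Polynomial.eval_eq_sum_range' ((Polynomial.natDegree_lt_iff_degree_lt hp0).2 hp),
      Finset.sum_mul]
    exact Finset.sum_congr rfl fun k _ => by ring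
  simp_rw [h]
  rw [intervalIntegral.integral_finsetSum]
  · refine Finset.sum_eq_zero fun k hk => ?_
    rw [intervalIntegral.integral_const_mul, hmom k (Finset.mem_range.1 hk), mul_zero]
  · intro k _
    apply Continuous.intervalIntegrable
    fun_prop

/-- Functions orthogonal to the polynomials of degree `< n` have small Fourier transforms. -/
theorem norm_integral_exp_mul_le {c α : ℝ} (hc : 0 < c) (hα : 0 ≤ α) {n : ℕ} (hn : n ≠ 0)
    {f : ℝ → ℂ} (hf : Continuous f)
    (hmom : ∀ k < n, ∫ y in (-1 : ℝ)..1, (y : ℂ) ^ k * (f y * (((1 - y ^ 2) ^ α : ℝ) : ℂ)) = 0)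
    (x : ℝ) :
    ‖∫ y in (-1 : ℝ)..1, Complex.exp (Complex.I * (c * x * y)) * f y *
        (((1 - y ^ 2) ^ α : ℝ) : ℂ)‖ ≤
      4 * (c * |x| / 2) ^ n / n.factorial *
        (√2 * √(∫ y in (-1 : ℝ)..1, ‖f y‖ ^ 2 * (1 - y ^ 2) ^ α)) := by
  have hw := continuous_one_sub_sq_rpow hα
  have hw' : Continuous fun y : ℝ => (((1 - y ^ 2) ^ α : ℝ) : ℂ) :=
    Complex.continuous_ofReal.comp hw
  obtain ⟨p, hp, hpe⟩ := exists_polynomial_norm_exp_sub_le hn (c * x)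
  rw [abs_mul, abs_of_pos hc] at hpe
  have hzero := integral_polynomial_mul_eq_zero (hf.mul hw') hmom hp
  simp only [Pi.mul_apply] at hzero
  have hpc : Continuous fun y : ℝ => p.eval (y : ℂ) := p.continuous.comp Complex.continuous_ofReal
  have hsub : ∫ y in (-1 : ℝ)..1, Complex.exp (Complex.I * (c * x * y)) * f y *
        (((1 - y ^ 2) ^ α : ℝ) : ℂ) =
      ∫ y in (-1 : ℝ)..1, (Complex.exp (Complex.I * ((c * x : ℝ) * y)) - p.eval (y : ℂ)) * f y *
        (((1 - y ^ 2) ^ α : ℝ) : ℂ) := by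
    rw [← sub_zero (∫ y in (-1 : ℝ)..1, Complex.exp _ * f y * _), ← hzero,
      ← intervalIntegral.integral_sub]
    · congr 1
      ext y
      push_cast
      ring
    · exact Continuous.intervalIntegrable (by fun_prop) _ _
    · exact Continuous.intervalIntegrable (by fun_prop) _ _
  rw [hsub]
  calc _ ≤ ∫ y in (-1 : ℝ)..1, 4 * (c * |x| / 2) ^ n / n.factorial *
        (‖f y‖ * (1 - y ^ 2) ^ α) := by
        refine intervalIntegral.norm_integral_le_of_norm_le (by norm_num)
          (Filter.Eventually.of_forall fun y hy => ?_)
          (Continuous.intervalIntegrable (by fun_prop) _ _)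
        have hwy : 0 ≤ (1 - y ^ 2) ^ α := one_sub_sq_rpow_nonneg ⟨hy.1.le, hy.2⟩
        rw [norm_mul, norm_mul, Complex.norm_real, norm_of_nonneg hwy, mul_assoc]
        gcongr
        exact hpe y (abs_le.2 ⟨hy.1.le, hy.2⟩)
    _ ≤ _ := by
        rw [intervalIntegral.integral_const_mul]
        gcongr
        exact integral_norm_mul_weight_le hα hf

theorem norm_eigenvalue_le {c α : ℝ} (hc : 0 < c) (hα : 0 ≤ α)
    {ψ : ℕ → ℝ → ℂ} {μ : ℕ → ℂ} (hcont : ∀ n, Continuous (ψ n))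
    (heig : ∀ n, ∀ x : ℝ,
      (∫ y in (-1 : ℝ)..1, Complex.exp (Complex.I * (c * x * y)) * ψ n y *
          (((1 - y ^ 2) ^ α : ℝ) : ℂ)) = μ n * ψ n x)
    (horth : ∀ m n, (∫ y in (-1 : ℝ)..1, ψ m y * (starRingEnd ℂ) (ψ n y) *
        (((1 - y ^ 2) ^ α : ℝ) : ℂ)) = if m = n then 1 else 0)
    (hdec : ∀ n, ‖μ (n + 1)‖ ≤ ‖μ n‖) {n : ℕ} (hn : n ≠ 0) :
    ‖μ n‖ ≤ 4 * √2 * ((c / 2) ^ n / n.factorial) *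
      √(Gamma (α + 1) / (n + 1 / 2) ^ (α + 1)) := by
  have hw := continuous_one_sub_sq_rpow hα
  have hw' : Continuous fun y : ℝ => (((1 - y ^ 2) ^ α : ℝ) : ℂ) :=
    Complex.continuous_ofReal.comp hw
  obtain ⟨a, ha0, ha⟩ := exists_ne_zero_sum_mul_eq_zero fun (k : Fin n) (j : Fin (n + 1)) =>
    ∫ y in (-1 : ℝ)..1, (y : ℂ) ^ (k : ℕ) * (ψ j y * (((1 - y ^ 2) ^ α : ℝ) : ℂ))
  have horth' : ∀ i j : Fin (n + 1), (∫ y in (-1 : ℝ)..1, ψ i y * (starRingEnd ℂ) (ψ j y) *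
      (((1 - y ^ 2) ^ α : ℝ) : ℂ)) = if i = j then 1 else 0 := by
    intro i j
    simp only [horth, Fin.ext_iff]
  set f : ℝ → ℂ := fun y => ∑ j : Fin (n + 1), a j * ψ j y with hf
  have hfc : Continuous f :=
    continuous_finsetSum _ fun j _ => continuous_const.mul (hcont j)
  set S := ∑ j, ‖a j‖ ^ 2 with hS
  have hSpos : 0 < S := by
    obtain ⟨j, hj⟩ := Function.ne_iff.1 ha0
    exact Finset.sum_pos' (fun _ _ => by positivity)
      ⟨j, Finset.mem_univ _, by have := norm_pos_iff.2 hj; positivity⟩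
  have hfS : ∫ y in (-1 : ℝ)..1, ‖f y‖ ^ 2 * (1 - y ^ 2) ^ α = S :=
    integral_norm_sq_sum_mul_weight hw (fun j : Fin (n + 1) => hcont j) horth' a
  have hmom : ∀ k < n,
      ∫ y in (-1 : ℝ)..1, (y : ℂ) ^ k * (f y * (((1 - y ^ 2) ^ α : ℝ) : ℂ)) = 0 := by
    intro k hk
    rw [← ha ⟨k, hk⟩]
    simp_rw [← intervalIntegral.integral_const_mul]
    rw [← intervalIntegral.integral_finsetSum]
    · congr 1
      ext y
      simp only [hf, Finset.sum_mul, Finset.mul_sum]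
      exact Finset.sum_congr rfl fun j _ => by ring
    · intro j _
      have := hcont j
      exact Continuous.intervalIntegrable (by fun_prop) _ _
  have hFf : ∀ x : ℝ, (∫ y in (-1 : ℝ)..1, Complex.exp (Complex.I * (c * x * y)) * f y *
      (((1 - y ^ 2) ^ α : ℝ) : ℂ)) = ∑ j : Fin (n + 1), a j * μ j * ψ j x := by
    intro x
    simp_rw [mul_assoc (a _), ← heig, ← intervalIntegral.integral_const_mul]
    rw [← intervalIntegral.integral_finsetSum]
    · congr 1
      ext y
      simp only [hf, Finset.sum_mul, Finset.mul_sum]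
      exact Finset.sum_congr rfl fun j _ => by ring
    · intro j _
      have := hcont j
      exact Continuous.intervalIntegrable (by fun_prop) _ _
  have hlower : ‖μ n‖ ^ 2 * S ≤ ∑ j : Fin (n + 1), ‖a j * μ j‖ ^ 2 := by
    rw [hS, Finset.mul_sum]
    refine Finset.sum_le_sum fun j _ => ?_
    rw [norm_mul, mul_pow, mul_comm]
    gcongr
    exact antitone_nat_of_succ_le (f := fun k => ‖μ k‖) hdec (Nat.lt_succ_iff.1 j.2)
  rw [← integral_norm_sq_sum_mul_weight hw (fun j : Fin (n + 1) => hcont j) horth'] at hlower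
  set K := 4 * √2 * ((c / 2) ^ n / n.factorial) with hK
  have hupper : ∫ x in (-1 : ℝ)..1, ‖∑ j : Fin (n + 1), a j * μ j * ψ j x‖ ^ 2 * (1 - x ^ 2) ^ α ≤
      K ^ 2 * S * ∫ x in (-1 : ℝ)..1, x ^ (2 * n) * (1 - x ^ 2) ^ α := by
    rw [← intervalIntegral.integral_const_mul]
    have hc1 : Continuous fun x => ∑ j : Fin (n + 1), a j * μ j * ψ j x :=
      continuous_finsetSum _ fun j _ => continuous_const.mul (hcont j)
    refine intervalIntegral.integral_mono_on (by norm_num)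
      (Continuous.intervalIntegrable (by fun_prop) _ _)
      (Continuous.intervalIntegrable (by fun_prop) _ _) fun x hx => ?_
    rw [← mul_assoc]
    refine mul_le_mul_of_nonneg_right ?_ (one_sub_sq_rpow_nonneg hx)
    have hb := norm_integral_exp_mul_le hc hα hn hfc hmom x
    rw [hFf, hfS] at hb
    calc _ ≤ (4 * (c * |x| / 2) ^ n / n.factorial * (√2 * √S)) ^ 2 := by gcongr
      _ = (K * |x| ^ n * √S) ^ 2 := by
          congr 1
          rw [hK, show c * |x| / 2 = c / 2 * |x| by ring, mul_pow]
          ring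
      _ = _ := by
          rw [mul_pow, mul_pow, sq_sqrt hSpos.le, ← pow_mul, mul_comm n 2,
            Even.pow_abs (even_two_mul n)]
          ring
  have hsq : ‖μ n‖ ^ 2 ≤ K ^ 2 * (Gamma (α + 1) / (n + 1 / 2) ^ (α + 1)) := by
    have h1 := hlower.trans hupper
    have h2 := integral_pow_mul_one_sub_sq_rpow_le n hα
    refine le_of_mul_le_mul_right (h1.trans ?_) hSpos
    calc _ ≤ K ^ 2 * S * (Gamma (α + 1) / (n + 1 / 2) ^ (α + 1)) := by gcongr
      _ = _ := by ring
  have hK0 : 0 ≤ K := by positivity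
  rw [← sqrt_sq hK0, ← sqrt_mul (sq_nonneg K)]
  exact le_sqrt_of_sq_le hsq

/-- Decay of the eigenvalues of the weighted finite Fourier transform
`F_c^{(α)} f(x) = ∫_{-1}^1 e^{icxy} f(y)(1-y²)^α dy` on `L²([-1,1],(1-y²)^α dy)`.
The `(ψ n, μ n)` are hypothesized to be a complete orthonormal system of continuous
eigenfunctions of `F_c^{(α)}`, with eigenvalues arranged in decreasing modulus; then for
every integer `n > (ec+1)/2`,
`|μ_n| ≤ (k_α/(c^{α/2+1} log((2n-1)/(ec)))) (ec/(2n-1))^{n+α/2}`,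
where `k_α = (2/e)^{1+α/2} π √Γ(α+1)`. -/
theorem mu_decay (c α : ℝ) (hc : 0 < c) (hα : 0 ≤ α)
    (ψ : ℕ → ℝ → ℂ) (μ : ℕ → ℂ)
    (hcont : ∀ n, Continuous (ψ n))
    (heig : ∀ n, ∀ x : ℝ,
      (∫ y in (-1 : ℝ)..1, Complex.exp (Complex.I * (c * x * y)) * ψ n y *
          (((1 - y ^ 2) ^ α : ℝ) : ℂ)) = μ n * ψ n x)
    (horth : ∀ m n, (∫ y in (-1 : ℝ)..1, ψ m y * (starRingEnd ℂ) (ψ n y) *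
        (((1 - y ^ 2) ^ α : ℝ) : ℂ)) = if m = n then 1 else 0)
    (hdec : ∀ n, ‖μ (n + 1)‖ ≤ ‖μ n‖)
    (hcomplete : ∀ f : ℝ → ℂ, Continuous f →
      (∀ n, (∫ y in (-1 : ℝ)..1, f y * (starRingEnd ℂ) (ψ n y) *
          (((1 - y ^ 2) ^ α : ℝ) : ℂ)) = 0) → ∀ x ∈ Set.Icc (-1 : ℝ) 1, f x = 0) :
    ∀ n : ℕ, (Real.exp 1 * c + 1) / 2 < (n : ℝ) →
      ‖μ n‖ ≤ (2 / Real.exp 1) ^ (1 + α / 2) * π * Real.sqrt (Real.Gamma (α + 1)) /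
          (c ^ (α / 2 + 1) * Real.log ((2 * (n : ℝ) - 1) / (Real.exp 1 * c))) *
          (Real.exp 1 * c / (2 * (n : ℝ) - 1)) ^ ((n : ℝ) + α / 2) := by
  intro n hn
  have hn0 : n ≠ 0 := by
    rintro rfl
    have : 0 < Real.exp 1 * c := by positivity
    push_cast at hn
    linarith
  exact (norm_eigenvalue_le hc hα hcont heig horth hdec hn0).trans (decay_bound_le hc hα hn)
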